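/- Let 𝒜 be a collection of subsets of ℝⁿ and V ≥ 0. If for every ε > 0 there exists a packing of 𝒜 into some brick of volume V + ε, then there exists a packing of 𝒜 into a brick of volume V. -/

import Mathlib

/-!
Among the bricks `[0, s₁] × ⋯ × [0, sₙ]` into which `A` packs there is one of least volume, which
then has volume at most `V`; it is enlarged to volume exactly `V` by the intermediate value theorem.

The side vectors `s` form a closed set. Indeed, along an ultrafilter the motions of a family of
packings converge, and disjointness of interiors survives: if the limiting copies of two sets had a
common interior point `x`, then, isometries being rigid, the inverses of the approximating motions
would bring `x` close to interior points of the two sets, so the copies would overlap already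
before the limit.

A minimising sequence can be kept bounded. If some `A i` contains a ball, the sides are bounded
below, hence bounded above while the volume is. If every `A i` has empty interior, disjointness is
vacuous; each copy can be pushed on its own into the corner of the brick, and the sides can be cut
down to a common bound for the diameters.
-/

open Pointwise

noncomputable section

/-- The rigid motion `(θ, ξ)` acting on a point of `ℝⁿ`: `x ↦ ξ + θx`. -/
def rmApply {n : ℕ} (θ : Matrix (Fin n) (Fin n) ℝ) (ξ : EuclideanSpace ℝ (Fin n))
    (x : EuclideanSpace ℝ (Fin n)) : EuclideanSpace ℝ (Fin n) :=
  ξ + (EuclideanSpace.equiv (Fin n) ℝ).symm (θ.mulVec (EuclideanSpace.equiv (Fin n) ℝ x))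

/-- `(θ, ξ)` is a packing of the family `A` into the set `C`: each `θ i` is orthogonal,
each repositioned set `σᵢ(Aᵢ)` is contained in `C`, and the repositioned sets have
pairwise disjoint interiors. -/
def IsPacking {n : ℕ} {ι : Type*} (A : ι → Set (EuclideanSpace ℝ (Fin n)))
    (θ : ι → Matrix (Fin n) (Fin n) ℝ) (ξ : ι → EuclideanSpace ℝ (Fin n))
    (C : Set (EuclideanSpace ℝ (Fin n))) : Prop :=
  (∀ i, θ i ∈ Matrix.orthogonalGroup (Fin n) ℝ) ∧
  (∀ i, rmApply (θ i) (ξ i) '' A i ⊆ C) ∧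
  Pairwise fun i j =>
    interior (rmApply (θ i) (ξ i) '' A i) ∩ interior (rmApply (θ j) (ξ j) '' A j) = ∅

/-- There exists a packing of `A` into `C`. -/
def PacksInto {n : ℕ} {ι : Type*} (A : ι → Set (EuclideanSpace ℝ (Fin n)))
    (C : Set (EuclideanSpace ℝ (Fin n))) : Prop :=
  ∃ θ ξ, IsPacking A θ ξ C

/-- The brick `[a 1, b 1] × ⋯ × [a n, b n]` in `ℝⁿ`. -/
def brick {n : ℕ} (a b : Fin n → ℝ) : Set (EuclideanSpace ℝ (Fin n)) :=
  {x | ∀ m, x m ∈ Set.Icc (a m) (b m)}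

open Filter Function Topology

section Isometry

variable {X Y Z κ : Type*} [PseudoEMetricSpace X] [PseudoEMetricSpace Y] [PseudoEMetricSpace Z]
  {l : Filter κ}

lemma tendsto_isometryEquiv_symm {f : κ → X ≃ᵢ Z} {x : X} {z : Z}
    (h : Tendsto (fun k => f k x) l (𝓝 z)) : Tendsto (fun k => (f k).symm z) l (𝓝 x) := by
  rw [tendsto_iff_edist_tendsto_0] at h ⊢
  refine h.congr fun k => ?_
  rw [← (f k).edist_eq ((f k).symm z) x, (f k).apply_symm_apply, edist_comm]

lemma eventually_mem_interior_image {f : κ → X ≃ᵢ Z} {A : Set X} {x : X} {z : Z}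
    (h : Tendsto (fun k => f k x) l (𝓝 z)) (hx : x ∈ interior A) :
    ∀ᶠ k in l, z ∈ interior (f k '' A) := by
  filter_upwards [(tendsto_isometryEquiv_symm h).eventually_mem (isOpen_interior.mem_nhds hx)]
    with k hk
  rw [← (f k).coe_toHomeomorph, ← Homeomorph.image_interior]
  exact ⟨(f k).symm z, hk, (f k).apply_symm_apply z⟩

lemma disjoint_interior_image_of_tendsto {f : κ → X ≃ᵢ Z} {g : κ → Y ≃ᵢ Z} {f₀ : X ≃ᵢ Z}
    {g₀ : Y ≃ᵢ Z} {A : Set X} {B : Set Y}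
    (hf : ∀ x ∈ A, Tendsto (fun k => f k x) l (𝓝 (f₀ x)))
    (hg : ∀ y ∈ B, Tendsto (fun k => g k y) l (𝓝 (g₀ y)))
    (h : ∃ᶠ k in l, Disjoint (interior (f k '' A)) (interior (g k '' B))) :
    Disjoint (interior (f₀ '' A)) (interior (g₀ '' B)) := by
  rw [← f₀.coe_toHomeomorph, ← g₀.coe_toHomeomorph, ← Homeomorph.image_interior,
    ← Homeomorph.image_interior, Set.disjoint_left]
  rintro _ ⟨x, hx, rfl⟩ ⟨y, hy, hxy⟩
  have hyx : Tendsto (fun k => g k y) l (𝓝 (f₀ x)) := hxy ▸ hg y (interior_subset hy)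
  obtain ⟨k, hdisj, hkA, hkB⟩ := (h.and_eventually
    ((eventually_mem_interior_image (hf x (interior_subset hx)) hx).and
      (eventually_mem_interior_image hyx hy))).exists
  exact Set.disjoint_left.1 hdisj hkA hkB

end Isometry

section Product

variable {α : Type*} [Fintype α] {s : α → ℝ}

lemma le_div_pow_of_prod_le {r W : ℝ} (hr : 0 < r) (hs : ∀ m, r ≤ s m) (hW : ∏ m, s m ≤ W)
    (m : α) : s m ≤ W / r ^ (Fintype.card α - 1) := by
  classical
  rw [le_div_iff₀ (by positivity)]
  calc s m * r ^ (Fintype.card α - 1)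
      = s m * ∏ _l ∈ Finset.univ.erase m, r := by
        rw [Finset.prod_const, Finset.card_erase_of_mem (Finset.mem_univ m), Finset.card_univ]
    _ ≤ s m * ∏ l ∈ Finset.univ.erase m, s l :=
        mul_le_mul_of_nonneg_left (Finset.prod_le_prod (fun _ _ => hr.le) fun l _ => hs l)
          (hr.le.trans (hs m))
    _ = ∏ l, s l := Finset.mul_prod_erase _ _ (Finset.mem_univ m)
    _ ≤ W := hW

lemma exists_le_prod_eq [Nonempty α] (hs : 0 ≤ s) {V : ℝ} (hV : ∏ m, s m ≤ V) :
    ∃ t, s ≤ t ∧ ∏ m, t m = V := by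
  have hV₀ : 0 ≤ V := (Finset.prod_nonneg fun m _ => hs m).trans hV
  have hlarge : V ≤ ∏ m, (s m + (V + 1)) :=
    calc V ≤ V + 1 := by linarith
      _ ≤ (V + 1) ^ Fintype.card α := le_self_pow₀ (by linarith) Fintype.card_ne_zero
      _ = ∏ _m : α, (V + 1) := by rw [Finset.prod_const, Finset.card_univ]
      _ ≤ ∏ m, (s m + (V + 1)) :=
        Finset.prod_le_prod (fun _ _ => by linarith) fun m _ => le_add_of_nonneg_left (hs m)
  have hcont : ContinuousOn (fun t : ℝ => ∏ m, (s m + t)) (Set.Icc 0 (V + 1)) := by fun_prop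
  obtain ⟨t, ht, htV⟩ := intermediate_value_Icc (by linarith) hcont ⟨by simpa using hV, hlarge⟩
  exact ⟨fun m => s m + t, fun m => le_add_of_nonneg_right ht.1, htV⟩

end Product

section Brick

variable {n : ℕ} {a b : Fin n → ℝ}

lemma isCompact_brick (a b : Fin n → ℝ) : IsCompact (brick a b) := by
  have h : brick a b = (EuclideanSpace.equiv (Fin n) ℝ).toHomeomorph ⁻¹' Set.Icc a b := by
    ext x
    simp [brick, Pi.le_def, forall_and]
  rw [h, Homeomorph.isCompact_preimage]
  exact isCompact_Icc

lemma brick_mono {a' b' : Fin n → ℝ} (ha : a' ≤ a) (hb : b ≤ b') : brick a b ⊆ brick a' b' :=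
  fun _ hx m => Set.Icc_subset_Icc (ha m) (hb m) (hx m)

lemma vadd_brick_subset (a b : Fin n → ℝ) (c : EuclideanSpace ℝ (Fin n)) :
    c +ᵥ brick a b ⊆ brick (c.ofLp + a) (c.ofLp + b) := by
  rintro _ ⟨x, hx, rfl⟩ m
  exact ⟨add_le_add_right (hx m).1 _, add_le_add_right (hx m).2 _⟩

lemma two_mul_le_of_closedBall_subset_brick {c : EuclideanSpace ℝ (Fin n)} {r : ℝ} (hr : 0 ≤ r)
    (h : Metric.closedBall c r ⊆ brick a b) (m : Fin n) : 2 * r ≤ b m - a m := by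
  have hmem : ∀ t : ℝ, |t| ≤ r → c m + t ∈ Set.Icc (a m) (b m) := fun t ht => by
    have hball : c + EuclideanSpace.single m t ∈ Metric.closedBall c r := by
      simpa [dist_eq_norm] using ht
    simpa using h hball m
  have hup := (hmem r (abs_of_nonneg hr).le).2
  have hlow := (hmem (-r) (by rw [abs_neg, abs_of_nonneg hr])).1
  linarith

lemma subset_Icc_csInf {S : Set ℝ} {d : ℝ} (h : ∀ x ∈ S, ∀ y ∈ S, x - y ≤ d) :
    S ⊆ Set.Icc (sInf S) (sInf S + d) := by
  intro x hx
  have hbelow : ∀ y ∈ S, x - d ≤ y := fun y hy => sub_le_comm.1 (h x hx y hy)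
  exact ⟨csInf_le ⟨x - d, hbelow⟩ hx, sub_le_iff_le_add.1 (le_csInf ⟨x, hx⟩ hbelow)⟩

lemma exists_vadd_subset_brick {B : Set (EuclideanSpace ℝ (Fin n))} {d : Fin n → ℝ}
    (h : ∀ m, ∀ x ∈ B, ∀ y ∈ B, x m - y m ≤ d m) :
    ∃ c : EuclideanSpace ℝ (Fin n), c +ᵥ B ⊆ brick 0 d := by
  let corner : Fin n → ℝ := fun m => sInf ((fun x : EuclideanSpace ℝ (Fin n) => x m) '' B)
  have hB : B ⊆ brick corner (corner + d) := fun x hx m =>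
    subset_Icc_csInf (by simpa only [Set.forall_mem_image] using h m) ⟨x, hx, rfl⟩
  refine ⟨WithLp.toLp 2 (-corner), (Set.vadd_set_mono hB).trans ?_⟩
  exact (vadd_brick_subset _ _ _).trans (brick_mono (by simp) (by simp))

end Brick

section RigidMotion

variable {n : ℕ}

instance compactSpace_unitaryGroup {α 𝕜 : Type*} [Fintype α] [DecidableEq α] [RCLike 𝕜] :
    CompactSpace (Matrix.unitaryGroup α 𝕜) := by
  have hbox : IsCompact (Set.univ.pi fun _ : α => Set.univ.pi fun _ : α =>
      Metric.closedBall (0 : 𝕜) 1) :=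
    isCompact_univ_pi fun _ => isCompact_univ_pi fun _ => isCompact_closedBall 0 1
  have hclosed : IsClosed (Matrix.unitaryGroup α 𝕜 : Set (Matrix α α 𝕜)) := isClosed_unitary
  exact isCompact_iff_compactSpace.1 <| hbox.of_isClosed_subset hclosed fun U hU i _ j _ =>
    mem_closedBall_zero_iff.2 (entry_norm_bound_of_unitary hU i j)

/-- The rigid motion `rmApply θ ξ` of an orthogonal matrix `θ`, bundled as an isometry of `ℝⁿ`,
so that metric and topological facts about isometries apply to it. -/
def rigidMotion (θ : Matrix.orthogonalGroup (Fin n) ℝ) (ξ : EuclideanSpace ℝ (Fin n)) :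
    EuclideanSpace ℝ (Fin n) ≃ᵢ EuclideanSpace ℝ (Fin n) :=
  (Unitary.linearIsometryEquiv
      ⟨Matrix.toEuclideanCLM (𝕜 := ℝ) θ.1, Unitary.map_mem _ θ.2⟩).toIsometryEquiv.trans
    (IsometryEquiv.addLeft ξ)

lemma coe_rigidMotion (θ : Matrix.orthogonalGroup (Fin n) ℝ) (ξ : EuclideanSpace ℝ (Fin n)) :
    ⇑(rigidMotion θ ξ) = rmApply θ ξ :=
  rfl

lemma rigidMotion_add (θ : Matrix.orthogonalGroup (Fin n) ℝ) (c ξ x : EuclideanSpace ℝ (Fin n)) :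
    rigidMotion θ (c + ξ) x = c + rigidMotion θ ξ x :=
  add_assoc _ _ _

lemma rigidMotion_add_image (θ : Matrix.orthogonalGroup (Fin n) ℝ)
    (c ξ : EuclideanSpace ℝ (Fin n)) (A : Set (EuclideanSpace ℝ (Fin n))) :
    rigidMotion θ (c + ξ) '' A = c +ᵥ rigidMotion θ ξ '' A := by
  rw [← Set.image_vadd, Set.image_image]
  exact Set.image_congr fun x _ => rigidMotion_add θ c ξ x

lemma continuous_rigidMotion (x : EuclideanSpace ℝ (Fin n)) :
    Continuous fun p : Matrix.orthogonalGroup (Fin n) ℝ × EuclideanSpace ℝ (Fin n) =>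
      rigidMotion p.1 p.2 x := by
  simp only [coe_rigidMotion]
  unfold rmApply
  fun_prop

lemma tendsto_rigidMotion {κ : Type*} {l : Filter κ} {θ : κ → Matrix.orthogonalGroup (Fin n) ℝ}
    {ξ : κ → EuclideanSpace ℝ (Fin n)} {T : Matrix.orthogonalGroup (Fin n) ℝ}
    {X : EuclideanSpace ℝ (Fin n)} (hθ : Tendsto θ l (𝓝 T)) (hξ : Tendsto ξ l (𝓝 X))
    (x : EuclideanSpace ℝ (Fin n)) :
    Tendsto (fun k => rigidMotion (θ k) (ξ k) x) l (𝓝 (rigidMotion T X x)) := by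
  simpa only [comp_def] using
    ((continuous_rigidMotion x).tendsto (T, X)).comp (hθ.prodMk_nhds hξ)

-- Convergence is only pointwise on `A`: the translation parts are unconstrained if `A` is empty.
lemma exists_tendsto_rigidMotion {κ : Type*} (U : Ultrafilter κ)
    (θ : κ → Matrix.orthogonalGroup (Fin n) ℝ) (ξ : κ → EuclideanSpace ℝ (Fin n))
    {A K : Set (EuclideanSpace ℝ (Fin n))} (hK : IsCompact K)
    (h : ∀ᶠ k in U, rigidMotion (θ k) (ξ k) '' A ⊆ K) :
    ∃ T X, ∀ x ∈ A,
      Tendsto (fun k => rigidMotion (θ k) (ξ k) x) U (𝓝 (rigidMotion T X x)) := by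
  rcases A.eq_empty_or_nonempty with rfl | ⟨p, hp⟩
  · exact ⟨1, 0, by simp⟩
  have hpK : ∀ᶠ k in U, rigidMotion (θ k) (ξ k) p ∈ K :=
    h.mono fun k hk => hk (Set.mem_image_of_mem _ hp)
  obtain ⟨q, -, hq⟩ : ∃ q ∈ K, Tendsto (fun k => rigidMotion (θ k) (ξ k) p) U (𝓝 q) :=
    hK.ultrafilter_le_nhds (U.map fun k => rigidMotion (θ k) (ξ k) p) (le_principal_iff.2 hpK)
  obtain ⟨T, hT⟩ : ∃ T, Tendsto θ U (𝓝 T) := ⟨_, (U.map θ).le_nhds_lim⟩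
  have hξ : Tendsto ξ U (𝓝 (q - rigidMotion T 0 p)) := by
    refine (hq.sub (tendsto_rigidMotion hT tendsto_const_nhds p)).congr fun k => ?_
    rw [sub_eq_iff_eq_add, ← rigidMotion_add, add_zero]
  exact ⟨T, _, fun x _ => tendsto_rigidMotion hT hξ x⟩

end RigidMotion

section Packing

variable {n : ℕ} {ι : Type*} {A : ι → Set (EuclideanSpace ℝ (Fin n))}

lemma packsInto_iff {C : Set (EuclideanSpace ℝ (Fin n))} :
    PacksInto A C ↔
      ∃ (θ : ι → Matrix.orthogonalGroup (Fin n) ℝ) (ξ : ι → EuclideanSpace ℝ (Fin n)),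
        (∀ i, rigidMotion (θ i) (ξ i) '' A i ⊆ C) ∧
          Pairwise (Disjoint on fun i => interior (rigidMotion (θ i) (ξ i) '' A i)) := by
  constructor
  · rintro ⟨θ, ξ, hθ, hsub, hdisj⟩
    exact ⟨fun i => ⟨θ i, hθ i⟩, ξ, hsub, fun i j hij =>
      Set.disjoint_iff_inter_eq_empty.2 (hdisj hij)⟩
  · rintro ⟨θ, ξ, hsub, hdisj⟩
    exact ⟨fun i => θ i, ξ, fun i => (θ i).2, hsub, fun i j hij =>
      Set.disjoint_iff_inter_eq_empty.1 (hdisj hij)⟩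

lemma PacksInto.mono {C C' : Set (EuclideanSpace ℝ (Fin n))} (h : PacksInto A C) (hC : C ⊆ C') :
    PacksInto A C' := by
  obtain ⟨θ, ξ, hθ, hsub, hdisj⟩ := h
  exact ⟨θ, ξ, hθ, fun i => (hsub i).trans hC, hdisj⟩

lemma PacksInto.vadd {C : Set (EuclideanSpace ℝ (Fin n))} (h : PacksInto A C)
    (c : EuclideanSpace ℝ (Fin n)) : PacksInto A (c +ᵥ C) := by
  obtain ⟨θ, ξ, hsub, hdisj⟩ := packsInto_iff.1 h
  refine packsInto_iff.2 ⟨θ, fun i => c + ξ i, fun i => ?_, fun i j hij => ?_⟩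
  · rw [rigidMotion_add_image]
    exact Set.vadd_set_mono (hsub i)
  · simp only [onFun, rigidMotion_add_image, interior_vadd]
    exact (Set.disjoint_image_iff (add_right_injective c)).2 (hdisj hij)

lemma packsInto_of_interior_eq_empty {C : Set (EuclideanSpace ℝ (Fin n))}
    (hA : ∀ i, interior (A i) = ∅) (h : ∀ i, ∃ θ ξ, rigidMotion θ ξ '' A i ⊆ C) :
    PacksInto A C := by
  choose θ ξ hsub using h
  refine packsInto_iff.2 ⟨θ, ξ, hsub, fun i j _ => ?_⟩
  rw [onFun, ← (rigidMotion (θ i) (ξ i)).coe_toHomeomorph, ← Homeomorph.image_interior, hA i,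
    Set.image_empty]
  exact Set.empty_disjoint _

theorem isClosed_setOf_packsInto_brick (A : ι → Set (EuclideanSpace ℝ (Fin n))) :
    IsClosed {p : (Fin n → ℝ) × (Fin n → ℝ) | PacksInto A (brick p.1 p.2)} := by
  refine isClosed_iff_ultrafilter.2 fun ⟨a, b⟩ U hU hpack => ?_
  have ha : Tendsto Prod.fst U (𝓝 a) := (continuous_fst.tendsto (a, b)).mono_left hU
  have hb : Tendsto Prod.snd U (𝓝 b) := (continuous_snd.tendsto (a, b)).mono_left hU
  replace hpack : ∀ᶠ p : (Fin n → ℝ) × (Fin n → ℝ) in U, PacksInto A (brick p.1 p.2) := hpack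
  simp only [packsInto_iff] at hpack
  obtain ⟨θ, hθ⟩ := hpack.choice
  obtain ⟨ξ, hξ⟩ := hθ.choice
  have hsub : ∀ i, ∀ᶠ p in U, rigidMotion (θ p i) (ξ p i) '' A i ⊆ brick p.1 p.2 := fun i =>
    hξ.mono fun p hp => hp.1 i
  have hbox : ∀ᶠ p : (Fin n → ℝ) × (Fin n → ℝ) in U, brick p.1 p.2 ⊆ brick (a - 1) (b + 1) := by
    have hab : Set.Ici (a - 1) ×ˢ Set.Iic (b + 1) ∈ 𝓝 (a, b) :=
      prod_mem_nhds (pi_Ici_mem_nhds (by simp)) (pi_Iic_mem_nhds (by simp))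
    filter_upwards [hU hab] with p hp using brick_mono hp.1 hp.2
  choose T X hlim using fun i => exists_tendsto_rigidMotion U (fun p => θ p i) (fun p => ξ p i)
    (isCompact_brick (a - 1) (b + 1)) ((hsub i).mp (hbox.mono fun _ h h' => h'.trans h))
  refine packsInto_iff.2 ⟨T, X, ?_, fun i j hij => ?_⟩
  · rintro i _ ⟨x, hx, rfl⟩ m
    have hxm := ((EuclideanSpace.proj m).continuous.tendsto _).comp (hlim i x hx)
    have hmem : ∀ᶠ p in U, rigidMotion (θ p i) (ξ p i) x ∈ brick p.1 p.2 :=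
      (hsub i).mono fun p hp => hp (Set.mem_image_of_mem _ hx)
    exact ⟨le_of_tendsto_of_tendsto (tendsto_pi_nhds.1 ha m) hxm (hmem.mono fun p hp => (hp m).1),
      le_of_tendsto_of_tendsto hxm (tendsto_pi_nhds.1 hb m) (hmem.mono fun p hp => (hp m).2)⟩
  · exact disjoint_interior_image_of_tendsto (hlim i) (hlim j)
      (hξ.mono fun p hp => hp.2 hij).frequently

/-- The side vectors `s` of the bricks `[0, s₁] × ⋯ × [0, sₙ]` into which `A` can be packed.
As packings can be translated, a corner at the origin is no restriction, and minimising the volume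
becomes a problem about this set of vectors. -/
def packingSides (A : ι → Set (EuclideanSpace ℝ (Fin n))) : Set (Fin n → ℝ) :=
  {s | 0 ≤ s ∧ PacksInto A (brick 0 s)}

lemma isClosed_packingSides (A : ι → Set (EuclideanSpace ℝ (Fin n))) :
    IsClosed (packingSides A) :=
  isClosed_Ici.inter
    ((isClosed_setOf_packsInto_brick A).preimage (f := fun s => (0, s)) (by fun_prop))

lemma isUpperSet_packingSides : IsUpperSet (packingSides A) := fun _ _ hst hs =>
  ⟨hs.1.trans hst, hs.2.mono (brick_mono le_rfl hst)⟩

lemma sub_mem_packingSides {a b : Fin n → ℝ} (hab : a ≤ b) (h : PacksInto A (brick a b)) :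
    b - a ∈ packingSides A := by
  refine ⟨sub_nonneg.2 hab, (h.vadd (WithLp.toLp 2 (-a))).mono ?_⟩
  exact (vadd_brick_subset _ _ _).trans (brick_mono (by simp) (by simp [neg_add_eq_sub]))

lemma exists_pos_forall_le_packingSides {i : ι} (hA : (interior (A i)).Nonempty) :
    ∃ r > 0, ∀ s ∈ packingSides A, ∀ m, r ≤ s m := by
  obtain ⟨p, hp⟩ := hA
  obtain ⟨r, hr, hball⟩ := Metric.nhds_basis_closedBall.mem_iff.1 (mem_interior_iff_mem_nhds.1 hp)
  refine ⟨2 * r, by positivity, fun s hs m => ?_⟩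
  obtain ⟨θ, ξ, hsub, -⟩ := packsInto_iff.1 hs.2
  have himage : Metric.closedBall (rigidMotion (θ i) (ξ i) p) r ⊆ brick 0 s := by
    rw [← IsometryEquiv.image_closedBall]
    exact (Set.image_mono hball).trans (hsub i)
  simpa using two_mul_le_of_closedBall_subset_brick hr.le himage m

lemma exists_forall_inf_mem_packingSides (hA : ∀ i, interior (A i) = ∅)
    (hne : (packingSides A).Nonempty) :
    ∃ D, ∀ s ∈ packingSides A, s ⊓ (fun _ => D) ∈ packingSides A := by
  obtain ⟨s₀, -, hpack₀⟩ := hne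
  obtain ⟨θ₀, ξ₀, hsub₀, -⟩ := packsInto_iff.1 hpack₀
  have hdist : ∀ i, ∀ x ∈ A i, ∀ y ∈ A i, dist x y ≤ Metric.diam (brick 0 s₀) := by
    intro i x hx y hy
    rw [← (rigidMotion (θ₀ i) (ξ₀ i)).dist_eq]
    exact Metric.dist_le_diam_of_mem (isCompact_brick 0 s₀).isBounded
      (hsub₀ i (Set.mem_image_of_mem _ hx)) (hsub₀ i (Set.mem_image_of_mem _ hy))
  refine ⟨Metric.diam (brick 0 s₀), fun s hs => ⟨le_inf hs.1 fun _ => Metric.diam_nonneg,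
    packsInto_of_interior_eq_empty hA fun i => ?_⟩⟩
  obtain ⟨θ, ξ, hsub, -⟩ := packsInto_iff.1 hs.2
  obtain ⟨c, hc⟩ : ∃ c : EuclideanSpace ℝ (Fin n), c +ᵥ rigidMotion (θ i) (ξ i) '' A i ⊆
      brick 0 (s ⊓ fun _ => Metric.diam (brick 0 s₀)) := by
    refine exists_vadd_subset_brick fun m => ?_
    rintro _ ⟨x, hx, rfl⟩ _ ⟨y, hy, rfl⟩
    have hx' := hsub i (Set.mem_image_of_mem _ hx) m
    have hy' := hsub i (Set.mem_image_of_mem _ hy) m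
    refine le_inf (by simpa using sub_le_sub hx'.2 hy'.1) ?_
    exact (le_abs_self _).trans <| (PiLp.dist_apply_le _ _ m).trans <|
      ((rigidMotion (θ i) (ξ i)).dist_eq x y).trans_le (hdist i x hx y hy)
  exact ⟨θ i, c + ξ i, by rwa [rigidMotion_add_image]⟩

lemma exists_bound_packingSides (hne : (packingSides A).Nonempty) (W : ℝ) :
    ∃ M : Fin n → ℝ, ∀ s ∈ packingSides A, ∏ m, s m ≤ W → ∃ t ∈ packingSides A, t ≤ s ∧ t ≤ M := by
  by_cases hA : ∀ i, interior (A i) = ∅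
  · obtain ⟨D, hD⟩ := exists_forall_inf_mem_packingSides hA hne
    exact ⟨fun _ => D, fun s hs _ => ⟨_, hD s hs, inf_le_left, inf_le_right⟩⟩
  · obtain ⟨i, hi⟩ := not_forall.1 hA
    obtain ⟨r, hr, hle⟩ := exists_pos_forall_le_packingSides (Set.nonempty_iff_ne_empty.2 hi)
    exact ⟨_, fun s hs hW => ⟨s, hs, le_rfl, le_div_pow_of_prod_le hr (hle s hs) hW⟩⟩

theorem exists_isMinOn_prod_packingSides (hne : (packingSides A).Nonempty) :
    ∃ s ∈ packingSides A, IsMinOn (fun s => ∏ m, s m) (packingSides A) s := by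
  obtain ⟨s₀, hs₀⟩ := hne
  obtain ⟨M, hM⟩ := exists_bound_packingSides ⟨s₀, hs₀⟩ (∏ m, s₀ m)
  have hcompact : IsCompact (packingSides A ∩ Set.Iic M) :=
    isCompact_Icc.of_isClosed_subset ((isClosed_packingSides A).inter isClosed_Iic)
      fun s hs => ⟨hs.1.1, hs.2⟩
  obtain ⟨t₀, ht₀, -, ht₀M⟩ := hM s₀ hs₀ le_rfl
  obtain ⟨s, hs, hmin⟩ := hcompact.exists_isMinOn ⟨t₀, ht₀, ht₀M⟩
    (f := fun s => ∏ m, s m) (by fun_prop)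
  have hle : ∀ u ∈ packingSides A, ∏ m, u m ≤ ∏ m, s₀ m → ∏ m, s m ≤ ∏ m, u m := by
    intro u hu hus₀
    obtain ⟨t, ht, htu, htM⟩ := hM u hu hus₀
    exact (isMinOn_iff.1 hmin t ⟨ht, htM⟩).trans
      (Finset.prod_le_prod (fun m _ => ht.1 m) fun m _ => htu m)
  refine ⟨s, hs.1, isMinOn_iff.2 fun u hu => ?_⟩
  rcases le_total (∏ m, u m) (∏ m, s₀ m) with h | h
  · exact hle u hu h
  · exact (hle s₀ hs₀ le_rfl).trans h

end Packing

/-- **Theorem 2 (first part).** If for every `ε > 0` there exists a packing of `A` into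
some brick of volume `V + ε`, then there exists a packing of `A` into a brick of
volume `V`. -/
theorem packing_of_bricks {n : ℕ} {ι : Type*} (A : ι → Set (EuclideanSpace ℝ (Fin n)))
    (V : ℝ) (hV : 0 ≤ V)
    (h : ∀ ε : ℝ, 0 < ε → ∃ a b : Fin n → ℝ, (∀ m, a m ≤ b m) ∧
      (∏ m, (b m - a m)) = V + ε ∧ PacksInto A (brick a b)) :
    ∃ a b : Fin n → ℝ, (∀ m, a m ≤ b m) ∧
      (∏ m, (b m - a m)) = V ∧ PacksInto A (brick a b) := by
  rcases eq_or_ne n 0 with rfl | hn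
  · -- The volume is an empty product, which cannot equal both `V + 1` and `V + 2`.
    obtain ⟨_, _, -, h₁, -⟩ := h 1 one_pos
    obtain ⟨_, _, -, h₂, -⟩ := h 2 two_pos
    simp only [Finset.univ_eq_empty, Finset.prod_empty] at h₁ h₂
    linarith
  have : NeZero n := ⟨hn⟩
  have hsides : ∀ ε > 0, ∃ s ∈ packingSides A, ∏ m, s m = V + ε := fun ε hε => by
    obtain ⟨a, b, hab, hvol, hpack⟩ := h ε hε
    exact ⟨b - a, sub_mem_packingSides hab hpack, hvol⟩
  obtain ⟨s₁, hs₁, -⟩ := hsides 1 one_pos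
  obtain ⟨s, hs, hmin⟩ := exists_isMinOn_prod_packingSides ⟨s₁, hs₁⟩
  have hsV : ∏ m, s m ≤ V := le_of_forall_pos_le_add fun ε hε => by
    obtain ⟨u, hu, huV⟩ := hsides ε hε
    exact huV ▸ isMinOn_iff.1 hmin u hu
  obtain ⟨t, hst, htV⟩ := exists_le_prod_eq hs.1 hsV
  have ht : t ∈ packingSides A := isUpperSet_packingSides hst hs
  exact ⟨0, t, ht.1, by simpa using htV, ht.2⟩
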